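/- Let H be a real Hilbert space, T > 0, 0 < γ < 1, 0 < δ < 1, 0 < α < 1, κ₁, κ₂, κ₃ ≥ 0, and κ_A > 0. Let A : H → H be a linear map that is symmetric (⟨A x, y⟩ = ⟨x, A y⟩) and satisfies ⟨A x, x⟩ ≥ κ_A ‖x‖² for all x, y. Let u : [0, T] → H be continuously differentiable, let f : [0, T] → H be continuous, and suppose that for all t ∈ (0, T]: u′(t) + κ₁ ∫₀ᵗ ω_{1−γ}(t − s) u′(s) ds + κ₂ u(t) + κ₃ ∫₀ᵗ ω_δ(t − s) u(s) ds + ∫₀ᵗ ω_α(t − s) A(u(s)) ds = f(t). Then for every t ∈ [0, T]: ‖u(t)‖² + κ₁ ∫₀ᵗ ω_{1−γ}(t − s) ‖u(s)‖² ds + 2κ₂ ∫₀ᵗ ‖u(s)‖² ds ≤ C₁ ( ‖u(0)‖² + ∫₀ᵗ ‖f(s)‖² ds ), where C₁ = max{ 2 + κ₁ T^{1−γ}(3 − γ)/Γ(3 − γ), 4T }. -/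

import Mathlib

/-!
The estimate is an energy estimate: the equation is tested with `u` and integrated over `(0, t)`.

* The Caputo term is bounded below by Alikhanov's inequality `⟨D^γ u, u⟩ ≥ ½ D^γ ‖u‖²`
  (`alikhanov`), and the time integral of `D^γ ‖u‖²` is `I^{1-γ} ‖u‖² - ω_{2-γ} ‖u(0)‖²`
  (`caputo_energy`).
* The two memory terms `∫ ⟨I^δ u, u⟩` and `∫ ⟨I^α A u, u⟩` are nonnegative
  (`volterra_positivity`): the kernel `ω_ν` with `0 < ν < 1` is a positive mixture of exponentials
  `e^{-λx}`, and for an exponential kernel positivity follows from the differential equation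
  satisfied by the convolution (`exp_positivity`). `A` is bounded, being symmetric and everywhere
  defined.
* What remains is `2 ∫ ⟨f, u⟩ ≤ 2T ∫ ‖f‖² + (1/2T) ∫ ‖u‖²`. Integrating the resulting bound on
  `‖u‖²` once more over `(0, t)` absorbs the last term into the left side (`apriori`), and
  `(3 - γ)/Γ(3 - γ) = 1/Γ(2 - γ) + 1/Γ(3 - γ)` accounts for the constant.
-/

open MeasureTheory Set
open scoped RealInnerProductSpace

/-- The kernel `ω_ν(t) = t^{ν-1} / Γ(ν)`. -/
noncomputable def om (ν t : ℝ) : ℝ := t ^ (ν - 1) / Real.Gamma ν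

/-! ### Fractional integrals of scalar functions -/

lemma om_nonneg {ν : ℝ} (hν : 0 < ν) {x : ℝ} (hx : 0 ≤ x) : 0 ≤ om ν x :=
  div_nonneg (Real.rpow_nonneg hx _) (Real.Gamma_pos_of_pos hν).le

lemma om_add_one {ν : ℝ} (hν : 0 < ν) (x : ℝ) : om (ν + 1) x = x ^ ν / (ν * Real.Gamma ν) := by
  rw [om, Real.Gamma_add_one hν.ne', add_sub_cancel_right]

lemma om_add_one_zero {ν : ℝ} (hν : 0 < ν) : om (ν + 1) 0 = 0 := by
  rw [om_add_one hν, Real.zero_rpow hν.ne', zero_div]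

lemma continuous_om {ν : ℝ} (hν : 0 < ν) : Continuous (om (ν + 1)) := by
  have : om (ν + 1) = fun x => x ^ ν / (ν * Real.Gamma ν) := funext (om_add_one hν)
  rw [this]
  exact (Real.continuous_rpow_const hν.le).div_const _

lemma hasDerivAt_om {ν : ℝ} (hν : 0 < ν) {x : ℝ} (hx : 0 < x) :
    HasDerivAt (om (ν + 1)) (om ν x) x := by
  have : om (ν + 1) = fun x => x ^ ν / (ν * Real.Gamma ν) := funext (om_add_one hν)
  rw [this]
  refine ((Real.hasDerivAt_rpow_const (p := ν) (Or.inl hx.ne')).div_const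
    (ν * Real.Gamma ν)).congr_deriv ?_
  rw [om, mul_div_mul_left _ _ hν.ne']

lemma intervalIntegrable_om {ν : ℝ} (hν : 0 < ν) (a b : ℝ) :
    IntervalIntegrable (om ν) volume a b :=
  (intervalIntegral.intervalIntegrable_rpow' (by linarith)).div_const _

lemma intervalIntegrable_om_sub {ν : ℝ} (hν : 0 < ν) (c a b : ℝ) :
    IntervalIntegrable (fun s => om ν (c - s)) volume a b := by
  have := (intervalIntegrable_om hν (c - a) (c - b)).comp_sub_left c (by simp)
  simpa using this

lemma integral_om {ν : ℝ} (hν : 0 < ν) {t : ℝ} (ht : 0 ≤ t) :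
    ∫ s in (0:ℝ)..t, om ν s = om (ν + 1) t := by
  rw [intervalIntegral.integral_eq_sub_of_hasDerivAt_of_le ht (continuous_om hν).continuousOn
    (fun x hx => hasDerivAt_om hν hx.1) (intervalIntegrable_om hν _ _), om_add_one_zero hν, sub_zero]

lemma integral_tri_right (g : ℝ → ℝ) {s t : ℝ} (hs : 0 ≤ s) (hst : s ≤ t) :
    ∫ r in Ioc 0 t, (Iio s).indicator g r = ∫ r in (0:ℝ)..s, g r := by
  rw [setIntegral_indicator measurableSet_Iio, intervalIntegral.integral_of_le hs,
    integral_Ioc_eq_integral_Ioo]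
  congr 2
  ext x; simp only [mem_inter_iff, mem_Ioc, mem_Iio, mem_Ioo]
  constructor
  · rintro ⟨⟨a, b⟩, c⟩; exact ⟨a, c⟩
  · rintro ⟨a, c⟩; exact ⟨⟨a, by linarith⟩, c⟩

lemma integral_tri_left (g : ℝ → ℝ) {r t : ℝ} (hr : 0 ≤ r) (hrt : r ≤ t) :
    ∫ s in Ioc 0 t, (Ioi r).indicator g s = ∫ s in r..t, g s := by
  rw [setIntegral_indicator measurableSet_Ioi, intervalIntegral.integral_of_le hrt]
  congr 2
  ext x; simp only [mem_inter_iff, mem_Ioc, mem_Ioi]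
  constructor
  · rintro ⟨⟨a, b⟩, c⟩; exact ⟨c, b⟩
  · rintro ⟨a, c⟩; exact ⟨⟨by linarith, c⟩, a⟩

/-- The triangle `{(s, r) | r < s}` over which an iterated Volterra integral runs. -/
def tri : Set (ℝ × ℝ) := {p | p.2 < p.1}

lemma measurableSet_tri : MeasurableSet tri := measurableSet_lt measurable_snd measurable_fst

lemma tri_indicator_right (G : ℝ × ℝ → ℝ) (s r : ℝ) :
    tri.indicator G (s, r) = (Iio s).indicator (fun r => G (s, r)) r := by
  simp [tri, indicator_apply]

lemma tri_indicator_left (G : ℝ × ℝ → ℝ) (s r : ℝ) :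
    tri.indicator G (s, r) = (Ioi r).indicator (fun s => G (s, r)) s := by
  simp [tri, indicator_apply]

/-- Lebesgue measure on `(0, t]`. -/
noncomputable abbrev vol (t : ℝ) : Measure ℝ := volume.restrict (Ioc 0 t)

lemma exists_bound {φ : ℝ × ℝ → ℝ} (hφ : Continuous φ) (t : ℝ) :
    ∃ M, ∀ᵐ p ∂((vol t).prod (vol t)), ‖φ p‖ ≤ M := by
  obtain ⟨M, hM⟩ := ((isCompact_Icc (a := (0:ℝ)) (b := t)).prod
    (isCompact_Icc (a := (0:ℝ)) (b := t))).exists_bound_of_continuousOn hφ.continuousOn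
  refine ⟨M, ?_⟩
  rw [vol, Measure.prod_restrict]
  filter_upwards [ae_restrict_mem (measurableSet_Ioc.prod measurableSet_Ioc)] with p hp
  exact hM p ⟨Ioc_subset_Icc_self hp.1, Ioc_subset_Icc_self hp.2⟩

/-- Absolute convergence of the iterated Volterra integrals, obtained from the integrability of a
convolution integrand. -/
lemma integrable_tri {ν : ℝ} (hν : 0 < ν) {t : ℝ} (ht : 0 ≤ t) {φ : ℝ × ℝ → ℝ}
    (hφ : Continuous φ) :
    Integrable (tri.indicator fun p => om ν (p.1 - p.2) * φ p) ((vol t).prod (vol t)) := by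
  have h1 : Integrable ((Ioc 0 t).indicator (fun _ => (1:ℝ))) volume :=
    (integrable_indicator_iff measurableSet_Ioc).2 (by simp)
  have h2 : Integrable ((Ioc 0 t).indicator (om ν)) volume :=
    (integrable_indicator_iff measurableSet_Ioc).2
      ((intervalIntegrable_iff_integrableOn_Ioc_of_le ht).1 (intervalIntegrable_om hν 0 t))
  have h3 := (h1.convolution_integrand (ContinuousLinearMap.mul ℝ ℝ) h2).integrableOn
    (s := Ioc 0 t ×ˢ Ioc 0 t)
  rw [IntegrableOn, ← Measure.prod_restrict] at h3
  obtain ⟨M, hM⟩ := exists_bound hφ t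
  refine (h3.bdd_mul hφ.aestronglyMeasurable hM).congr ?_
  rw [Measure.prod_restrict]
  filter_upwards [ae_restrict_mem (measurableSet_Ioc.prod measurableSet_Ioc)] with p hp
  obtain ⟨⟨a, b⟩, c, d⟩ := hp
  by_cases h : p.2 < p.1
  · have h' : p.1 - p.2 ∈ Ioc 0 t := ⟨by linarith, by linarith⟩
    simp [tri, h, h', -mem_Ioc, mem_Ioc.2 ⟨c, d⟩, mul_comm]
  · have h' : p.1 - p.2 ∉ Ioc 0 t := fun hh => h (by linarith [hh.1])
    simp [tri, indicator_apply, h, h', -mem_Ioc]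

lemma intervalIntegrable_volterra {ν : ℝ} (hν : 0 < ν) {t : ℝ} (ht : 0 ≤ t) {φ : ℝ × ℝ → ℝ}
    (hφ : Continuous φ) :
    IntervalIntegrable (fun s => ∫ r in (0:ℝ)..s, om ν (s - r) * φ (s, r)) volume 0 t := by
  rw [intervalIntegrable_iff_integrableOn_Ioc_of_le ht]
  refine (integrable_tri hν ht hφ).integral_prod_left.congr ?_
  filter_upwards [ae_restrict_mem measurableSet_Ioc] with s hs
  simp_rw [tri_indicator_right]
  exact integral_tri_right _ hs.1.le hs.2

lemma integral_tri_eq {t : ℝ} (ht : 0 ≤ t) {G : ℝ × ℝ → ℝ}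
    (hG : Integrable (tri.indicator G) ((vol t).prod (vol t))) :
    ∫ p, tri.indicator G p ∂((vol t).prod (vol t))
      = ∫ s in (0:ℝ)..t, ∫ r in (0:ℝ)..s, G (s, r) := by
  rw [integral_prod _ hG, intervalIntegral.integral_of_le ht]
  refine setIntegral_congr_fun measurableSet_Ioc fun s hs => ?_
  simp_rw [tri_indicator_right]
  exact integral_tri_right _ hs.1.le hs.2

/-- The semigroup law `I¹ I^ν q = I^{ν+1} q` of fractional integrals. -/
lemma integral_volterra {ν : ℝ} (hν : 0 < ν) {t : ℝ} (ht : 0 ≤ t) {q : ℝ → ℝ}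
    (hq : Continuous q) :
    ∫ s in (0:ℝ)..t, ∫ r in (0:ℝ)..s, om ν (s - r) * q r
      = ∫ r in (0:ℝ)..t, om (ν + 1) (t - r) * q r := by
  have hi := integrable_tri hν ht (φ := fun p => q p.2) (by fun_prop)
  rw [← integral_tri_eq (G := fun p => om ν (p.1 - p.2) * q p.2) ht hi, integral_prod_symm _ hi,
    intervalIntegral.integral_of_le ht]
  refine setIntegral_congr_fun measurableSet_Ioc fun r hr => ?_
  simp_rw [tri_indicator_left]
  rw [integral_tri_left _ hr.1.le hr.2]
  simp only [intervalIntegral.integral_mul_const]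
  rw [intervalIntegral.integral_comp_sub_right (fun x => om ν x), sub_self,
    integral_om hν (by linarith [hr.2])]

/-- Integration by parts for the Riemann–Liouville integral: `I^{ν+1} p' = I^ν p - ω_{ν+1} p(0)`. -/
lemma integral_om_mul_deriv {ν : ℝ} (hν : 0 < ν) {t : ℝ} (ht : 0 ≤ t) {p q : ℝ → ℝ}
    (hp : ∀ x, HasDerivAt p (q x) x) (hq : Continuous q) :
    ∫ r in (0:ℝ)..t, om (ν + 1) (t - r) * q r
      = (∫ r in (0:ℝ)..t, om ν (t - r) * p r) - om (ν + 1) t * p 0 := by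
  have hpc : Continuous p := continuous_iff_continuousAt.2 fun x => (hp x).continuousAt
  have hoc : Continuous fun r => om (ν + 1) (t - r) :=
    (continuous_om hν).comp (continuous_const.sub continuous_id)
  have i1 : IntervalIntegrable (fun r => om ν (t - r) * p r) volume 0 t :=
    (intervalIntegrable_om_sub hν t 0 t).mul_continuousOn hpc.continuousOn
  have i2 : IntervalIntegrable (fun r => om (ν + 1) (t - r) * q r) volume 0 t :=
    (hoc.mul hq).intervalIntegrable _ _
  have := intervalIntegral.integral_eq_sub_of_hasDerivAt_of_le ht
    (f := fun r => om (ν + 1) (t - r) * p r)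
    (f' := fun r => om (ν + 1) (t - r) * q r - om ν (t - r) * p r)
    (hoc.mul hpc).continuousOn (fun x hx => by
      have h1 := (hasDerivAt_om hν (x := t - x) (by linarith [hx.2])).comp x
        ((hasDerivAt_id x).const_sub t)
      refine (h1.mul (hp x)).congr_deriv ?_
      simp only [Function.comp_apply]
      ring) (i2.sub i1)
  rw [intervalIntegral.integral_sub i2 i1] at this
  simp only [sub_self, sub_zero, om_add_one_zero hν, zero_mul] at this
  linarith

/-! ### Energy inequalities for Hilbert-space-valued functions -/

section Energy

variable {H : Type*} [NormedAddCommGroup H] [InnerProductSpace ℝ H]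

lemma inner_integral_om [CompleteSpace H] {ν : ℝ} (hν : 0 < ν) {s : ℝ} (w : H) {v : ℝ → H} (hv : Continuous v) :
    ⟪∫ r in (0:ℝ)..s, om ν (s - r) • v r, w⟫ = ∫ r in (0:ℝ)..s, om ν (s - r) * ⟪v r, w⟫ := by
  have hi : IntervalIntegrable (fun r => om ν (s - r) • v r) volume 0 s :=
    (intervalIntegrable_om_sub hν s 0 s).smul_continuousOn hv.continuousOn
  have := ((innerSL ℝ) w).intervalIntegral_comp_comm hi
  simp only [innerSL_apply_apply] at this
  rw [real_inner_comm, ← this]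
  simp only [real_inner_smul_right, real_inner_comm]

/-- Alikhanov's inequality `⟨D^γ u, u⟩ ≥ ½ D^γ ‖u‖²` for the Caputo derivative. The function
`-½ ω(s - r) ‖u(s) - u(r)‖²` of `r` vanishes at `r = s`, is nonpositive at `r = 0`, and has
derivative at most `ω(s - r) ⟨u(s) - u(r), u'(r)⟩` because `ω` is decreasing. -/
lemma alikhanov {γ : ℝ} (hγ0 : 0 < γ) (hγ1 : γ < 1) {u u' : ℝ → H}
    (hu : ∀ x, HasDerivAt u (u' x) x) (hu' : Continuous u') {s : ℝ} (hs : 0 < s) :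
    ∫ r in (0:ℝ)..s, om (1 - γ) (s - r) * ⟪u' r, u r⟫
      ≤ ∫ r in (0:ℝ)..s, om (1 - γ) (s - r) * ⟪u' r, u s⟫ := by
  have hν : 0 < 1 - γ := by linarith
  have hΓ : 0 < Real.Gamma (1 - γ) := Real.Gamma_pos_of_pos hν
  have hc : Continuous u := continuous_iff_continuousAt.2 fun x => (hu x).continuousAt
  have i0 := intervalIntegrable_om_sub hν s 0 s
  have i1 : IntervalIntegrable (fun r => om (1 - γ) (s - r) * ⟪u' r, u r⟫) volume 0 s :=
    i0.mul_continuousOn (by fun_prop)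
  have i2 : IntervalIntegrable (fun r => om (1 - γ) (s - r) * ⟪u' r, u s⟫) volume 0 s :=
    i0.mul_continuousOn (by fun_prop)
  rw [← sub_nonneg, ← intervalIntegral.integral_sub i2 i1]
  obtain ⟨M, hM⟩ := (isCompact_Icc (a := (0:ℝ)) (b := s)).exists_bound_of_continuousOn
    hu'.continuousOn
  set h : ℝ → ℝ := fun r => -(1/2) * (om (1 - γ) (s - r) * ‖u s - u r‖ ^ 2) with hh
  have hderiv : ∀ x < s, HasDerivAt h
      (-(1/2) * (γ * (s - x) ^ (-γ - 1) / Real.Gamma (1 - γ) * ‖u s - u x‖ ^ 2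
        + om (1 - γ) (s - x) * (2 * ⟪u s - u x, - u' x⟫))) x := by
    intro x hx
    have h1 := ((hasDerivAt_id x).const_sub s).rpow_const (p := 1 - γ - 1)
      (Or.inl (by simp; linarith))
    have h2 := h1.div_const (Real.Gamma (1 - γ))
    have h3 := ((hu x).const_sub (u s)).norm_sq
    refine ((h2.mul h3).const_mul (-(1/2) : ℝ)).congr_deriv ?_
    simp only [om, id_eq, show 1 - γ - 1 = -γ by ring]
    ring
  -- The singularity `(s - r)^(-γ)` is beaten by `‖u(s) - u(r)‖² = O((s - r)²)`.
  have hlim : ContinuousWithinAt h (Icc 0 s) s := by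
    have hs0 : h s = 0 := by simp [hh]
    have hlip : ∀ r ∈ Icc (0:ℝ) s, ‖u s - u r‖ ≤ M * ‖s - r‖ := fun r hr =>
      (convex_Icc (0:ℝ) s).norm_image_sub_le_of_norm_hasDerivWithin_le
        (fun x _ => (hu x).hasDerivWithinAt) hM hr ⟨hs.le, le_rfl⟩
    rw [ContinuousWithinAt, hs0]
    refine squeeze_zero_norm' (a := fun r => M ^ 2 / Real.Gamma (1 - γ) * (s - r) ^ (2 - γ)) ?_ ?_
    · filter_upwards [self_mem_nhdsWithin] with r hr
      rcases hr.2.eq_or_lt with rfl | hrs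
      · rw [hs0, sub_self, Real.zero_rpow (by linarith)]; simp
      · have hp : 0 < s - r := by linarith
        have e : (s - r) ^ (2 - γ) = (s - r) ^ (1 - γ - 1) * (s - r) ^ 2 := by
          rw [← Real.rpow_natCast, ← Real.rpow_add hp]; congr 1; push_cast; ring
        have hb := hlip r hr
        rw [Real.norm_of_nonneg hp.le] at hb
        have hb2 : ‖u s - u r‖ ^ 2 ≤ (M * (s - r)) ^ 2 := by gcongr
        have ho : 0 ≤ om (1 - γ) (s - r) := om_nonneg hν hp.le
        calc ‖h r‖ = 1/2 * (om (1 - γ) (s - r) * ‖u s - u r‖ ^ 2) := by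
              rw [hh]; simp only [norm_mul, norm_neg]
              rw [Real.norm_of_nonneg ho, Real.norm_of_nonneg (sq_nonneg _)]; norm_num
          _ ≤ 1 * (om (1 - γ) (s - r) * (M * (s - r)) ^ 2) := by gcongr; norm_num
          _ = _ := by rw [e, om]; ring
    · have : Continuous fun r : ℝ => M ^ 2 / Real.Gamma (1 - γ) * (s - r) ^ (2 - γ) :=
        continuous_const.mul ((Real.continuous_rpow_const (by linarith)).comp
          (continuous_const.sub continuous_id))
      have h4 := this.tendsto s
      simp only [sub_self, Real.zero_rpow (show (2:ℝ) - γ ≠ 0 by linarith), mul_zero] at h4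
      exact h4.mono_left nhdsWithin_le_nhds
  have hcont : ContinuousOn h (Icc 0 s) := fun x hx => by
    rcases hx.2.eq_or_lt with rfl | hxs
    · exact hlim
    · exact (hderiv x hxs).continuousAt.continuousWithinAt
  have key := intervalIntegral.sub_le_integral_of_hasDeriv_right_of_le hs.le hcont
    (fun x hx => (hderiv x hx.2).hasDerivWithinAt)
    ((intervalIntegrable_iff_integrableOn_Icc_of_le hs.le).1 (i2.sub i1)) (fun x hx => by
      have hp : 0 < s - x := by linarith [hx.2]
      have h5 : 0 ≤ γ * (s - x) ^ (-γ - 1) / Real.Gamma (1 - γ) * ‖u s - u x‖ ^ 2 := by positivity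
      rw [inner_neg_right, inner_sub_left, real_inner_comm, real_inner_comm (u' x)]
      nlinarith)
  refine le_trans ?_ key
  have ho : 0 ≤ om (1 - γ) (s - 0) := om_nonneg hν (by linarith)
  have : 0 ≤ om (1 - γ) (s - 0) * ‖u s - u 0‖ ^ 2 := by positivity
  simp only [hh, sub_self, norm_zero]
  nlinarith

/-- Integrated form of Alikhanov's inequality. -/
lemma caputo_energy {γ : ℝ} (hγ0 : 0 < γ) (hγ1 : γ < 1) {u u' : ℝ → H}
    (hu : ∀ x, HasDerivAt u (u' x) x) (hu' : Continuous u') {t : ℝ} (ht : 0 ≤ t) :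
    (∫ s in (0:ℝ)..t, om (1 - γ) (t - s) * ‖u s‖ ^ 2) - om (2 - γ) t * ‖u 0‖ ^ 2
      ≤ 2 * ∫ s in (0:ℝ)..t, ∫ r in (0:ℝ)..s, om (1 - γ) (s - r) * ⟪u' r, u s⟫ := by
  have hν : 0 < 1 - γ := by linarith
  have hc : Continuous u := continuous_iff_continuousAt.2 fun x => (hu x).continuousAt
  have e : (2:ℝ) - γ = 1 - γ + 1 := by ring
  have h1 := integral_om_mul_deriv hν ht (p := fun x => ‖u x‖ ^ 2)
    (q := fun x => 2 * ⟪u' x, u x⟫)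
    (fun x => by rw [real_inner_comm]; exact (hu x).norm_sq) (by fun_prop)
  rw [e, ← h1, ← integral_volterra hν ht (by fun_prop), ← intervalIntegral.integral_const_mul]
  refine intervalIntegral.integral_mono_on_of_le_Ioo ht
    (intervalIntegrable_volterra hν ht (φ := fun p => 2 * ⟪u' p.2, u p.2⟫) (by fun_prop))
    ((intervalIntegrable_volterra hν ht (φ := fun p => ⟪u' p.2, u p.1⟫) (by fun_prop)).const_mul 2)
    fun s hs => ?_
  have := alikhanov hγ0 hγ1 hu hu' hs.1
  simp only [mul_left_comm _ (2:ℝ), intervalIntegral.integral_const_mul]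
  linarith

/-- Positivity for the exponential kernel: with `y(s) = ∫₀ˢ e^{λr} u(r) dr`, the integrand is
`e^{-2λs} ⟨B y, y'⟩`, which dominates the derivative of `½ e^{-2λs} ⟨B y, y⟩`. -/
lemma exp_positivity [CompleteSpace H] (B : H →L[ℝ] H) (hsym : ∀ x y : H, ⟪B x, y⟫ = ⟪x, B y⟫)
    (hpos : ∀ x : H, 0 ≤ ⟪B x, x⟫) {u : ℝ → H} (hu : Continuous u) {l : ℝ} (hl : 0 < l)
    {t : ℝ} (ht : 0 ≤ t) :
    0 ≤ ∫ s in (0:ℝ)..t, ∫ r in (0:ℝ)..s, Real.exp (-((s - r) * l)) * ⟪B (u r), u s⟫ := by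
  have hcv : Continuous fun r => Real.exp (l * r) • u r := by fun_prop
  set y : ℝ → H := fun s => ∫ r in (0:ℝ)..s, Real.exp (l * r) • u r with hy
  have hyd : ∀ s, HasDerivAt y (Real.exp (l * s) • u s) s := fun s =>
    (hcv.integral_hasStrictDerivAt 0 s).hasDerivAt
  have hyc : Continuous y := continuous_iff_continuousAt.2 fun x => (hyd x).continuousAt
  have hin : ∀ s, ∫ r in (0:ℝ)..s, Real.exp (-((s - r) * l)) * ⟪B (u r), u s⟫
      = Real.exp (-(l * s)) * ⟪B (y s), u s⟫ := by
    intro s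
    have h1 := (((innerSL ℝ) (u s)).comp B).intervalIntegral_comp_comm
      (hcv.intervalIntegrable (μ := volume) 0 s)
    simp only [ContinuousLinearMap.comp_apply, innerSL_apply_apply] at h1
    rw [real_inner_comm, hy, ← h1, ← intervalIntegral.integral_const_mul]
    refine intervalIntegral.integral_congr fun r _ => ?_
    simp only [map_smul, real_inner_smul_right]
    rw [← mul_assoc, ← Real.exp_add, real_inner_comm]
    congr 2; ring
  simp_rw [hin]
  have key := intervalIntegral.sub_le_integral_of_hasDeriv_right_of_le ht
    (g := fun s => 1 / 2 * (Real.exp (-(2 * l * s)) * ⟪B (y s), y s⟫))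
    (φ := fun s => Real.exp (-(l * s)) * ⟪B (y s), u s⟫)
    (g' := fun s => 1 / 2 * (Real.exp (-(2 * l * s)) * (-(2 * l)) * ⟪B (y s), y s⟫
      + Real.exp (-(2 * l * s)) * (⟪B (y s), Real.exp (l * s) • u s⟫
        + ⟪B (Real.exp (l * s) • u s), y s⟫)))
    (by fun_prop)
    (fun x _ => by
      refine HasDerivAt.hasDerivWithinAt (HasDerivAt.const_mul _ (HasDerivAt.mul ?_ ?_))
      · have := (((hasDerivAt_id x).const_mul (2 * l)).neg).exp
        simpa using this
      · exact (B.hasFDerivAt.comp_hasDerivAt x (hyd x)).inner ℝ (hyd x))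
    ((by fun_prop : Continuous fun s => Real.exp (-(l * s)) * ⟪B (y s), u s⟫).integrableOn_Icc)
    (fun x _ => by
      have e : Real.exp (-(l * x)) = Real.exp (-(2 * l * x)) * Real.exp (l * x) := by
        rw [← Real.exp_add]; congr 1; ring
      have h2 : 0 ≤ l * (Real.exp (-(2 * l * x)) * ⟪B (y x), y x⟫) :=
        mul_nonneg hl.le (mul_nonneg (Real.exp_pos _).le (hpos _))
      rw [hsym (_ • _), real_inner_comm (B (y x)) (_ • u x), real_inner_smul_right, e]
      linarith)
  refine le_trans ?_ key
  have h0 : y 0 = 0 := by simp [hy]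
  have h3 : 0 ≤ Real.exp (-(2 * l * t)) * ⟪B (y t), y t⟫ :=
    mul_nonneg (Real.exp_pos _).le (hpos _)
  simp only [h0, map_zero, inner_zero_left, mul_zero, sub_zero]
  linarith

/-- The power kernel is a mixture of exponentials. -/
lemma integral_laplace {ν : ℝ} (hν0 : 0 < ν) (hν1 : ν < 1) {x : ℝ} (hx : 0 < x) :
    ∫ l in Ioi (0:ℝ), l ^ (-ν) * Real.exp (-(x * l))
      = Real.Gamma ν * Real.Gamma (1 - ν) * om ν x := by
  have h := Real.integral_rpow_mul_exp_neg_mul_Ioi (a := 1 - ν) (by linarith) hx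
  rw [show 1 - ν - 1 = -ν by ring] at h
  have hΓ := (Real.Gamma_pos_of_pos hν0).ne'
  rw [h, om, one_div, Real.inv_rpow hx.le, ← Real.rpow_neg hx.le, neg_sub]
  field_simp

lemma integrableOn_laplace {ν : ℝ} (hν1 : ν < 1) {x : ℝ} (hx : 0 < x) :
    IntegrableOn (fun l => l ^ (-ν) * Real.exp (-(x * l))) (Ioi (0:ℝ)) := by
  have := integrableOn_rpow_mul_exp_neg_mul_rpow (p := 1) (s := -ν) (by linarith) one_pos hx
  simpa only [Real.rpow_one, neg_mul] using this

/-- Positivity of the fractional integral: `∫₀ᵗ ⟨I^ν B u, u⟩ ≥ 0`, by averaging the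
exponential case over the Laplace representation of the kernel. -/
lemma volterra_positivity [CompleteSpace H] {ν : ℝ} (hν0 : 0 < ν) (hν1 : ν < 1) (B : H →L[ℝ] H)
    (hsym : ∀ x y : H, ⟪B x, y⟫ = ⟪x, B y⟫)
    (hpos : ∀ x : H, 0 ≤ ⟪B x, x⟫) {u : ℝ → H} (hu : Continuous u) {t : ℝ} (ht : 0 ≤ t) :
    0 ≤ ∫ s in (0:ℝ)..t, ∫ r in (0:ℝ)..s, om ν (s - r) * ⟪B (u r), u s⟫ := by
  set φ : ℝ × ℝ → ℝ := fun p => ⟪B (u p.2), u p.1⟫ with hφd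
  have hφ : Continuous φ := by fun_prop
  set c := Real.Gamma ν * Real.Gamma (1 - ν) with hcd
  have hc : 0 < c := mul_pos (Real.Gamma_pos_of_pos hν0) (Real.Gamma_pos_of_pos (by linarith))
  have hi := integrable_tri hν0 ht hφ
  set G : ℝ × ℝ → ℝ → ℝ := fun p l =>
    tri.indicator (fun p => l ^ (-ν) * Real.exp (-((p.1 - p.2) * l)) * φ p) p with hG
  have hGm : AEStronglyMeasurable (Function.uncurry G)
      (((vol t).prod (vol t)).prod (volume.restrict (Ioi 0))) := by
    have e : Function.uncurry G = (Prod.fst ⁻¹' tri).indicator (fun q : (ℝ × ℝ) × ℝ =>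
        q.2 ^ (-ν) * Real.exp (-((q.1.1 - q.1.2) * q.2)) * φ q.1) := by
        rfl
    rw [e]
    refine (Measurable.indicator ?_ (measurable_fst measurableSet_tri)).aestronglyMeasurable
    have := hφ.measurable
    fun_prop
  have hsec : ∀ p, Integrable (G p) (volume.restrict (Ioi 0)) := fun p => by
    by_cases hp : p ∈ tri
    · simp only [hG, indicator_of_mem hp]
      exact (integrableOn_laplace hν1 (sub_pos.2 hp)).mul_const _
    · simp [hG, indicator_of_notMem hp]
  have hint : ∀ p, ∫ l in Ioi (0:ℝ), G p l
      = c * tri.indicator (fun p => om ν (p.1 - p.2) * φ p) p := fun p => by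
    by_cases hp : p ∈ tri
    · simp only [hG, indicator_of_mem hp]
      rw [integral_mul_const, integral_laplace hν0 hν1 (sub_pos.2 hp), mul_assoc]
    · simp [hG, indicator_of_notMem hp]
  have hnorm : ∀ p, ∫ l in Ioi (0:ℝ), ‖G p l‖
      = c * ‖tri.indicator (fun p => om ν (p.1 - p.2) * φ p) p‖ := fun p => by
    by_cases hp : p ∈ tri
    · have hx : 0 < p.1 - p.2 := sub_pos.2 hp
      simp only [hG, indicator_of_mem hp]
      rw [norm_mul, Real.norm_of_nonneg (om_nonneg hν0 hx.le), ← mul_assoc,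
        ← integral_laplace hν0 hν1 hx, ← integral_mul_const]
      refine setIntegral_congr_fun measurableSet_Ioi fun l hl => ?_
      have : 0 ≤ l ^ (-ν) * Real.exp (-((p.1 - p.2) * l)) :=
        mul_nonneg (Real.rpow_nonneg (le_of_lt hl) _) (Real.exp_pos _).le
      simp only [norm_mul _ (φ p), Real.norm_of_nonneg this]
    · simp [hG, indicator_of_notMem hp]
  have hGi : Integrable (Function.uncurry G)
      (((vol t).prod (vol t)).prod (volume.restrict (Ioi 0))) := by
    rw [integrable_prod_iff hGm]
    refine ⟨Filter.Eventually.of_forall hsec, ?_⟩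
    simp only [Function.uncurry_apply_pair, hnorm]
    exact hi.norm.const_mul c
  -- Fubini applies because the integral of `‖G‖` over the exponents is the integrable weakly
  -- singular integrand; after the swap, each exponent contributes a nonnegative amount.
  have hswap := integral_integral_swap hGi
  simp only [hint] at hswap
  rw [integral_const_mul, integral_tri_eq (G := fun p => om ν (p.1 - p.2) * φ p) ht hi] at hswap
  refine nonneg_of_mul_nonneg_right (hswap ▸ ?_) hc
  refine setIntegral_nonneg measurableSet_Ioi fun l hl => ?_
  have hl : 0 < l := hl
  have hE : Integrable (tri.indicator fun p => Real.exp (-((p.1 - p.2) * l)) * φ p)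
      ((vol t).prod (vol t)) := by
    have hcE : Continuous fun p : ℝ × ℝ => Real.exp (-((p.1 - p.2) * l)) * φ p := by fun_prop
    obtain ⟨M, hM⟩ := exists_bound hcE t
    exact (Integrable.of_bound hcE.aestronglyMeasurable M hM).indicator measurableSet_tri
  have e : ∀ p, G p l
      = l ^ (-ν) * tri.indicator (fun p => Real.exp (-((p.1 - p.2) * l)) * φ p) p := fun p => by
    by_cases hp : p ∈ tri <;> simp [hG, hp, mul_assoc]
  simp only [e]
  rw [integral_const_mul,
    integral_tri_eq (G := fun p => Real.exp (-((p.1 - p.2) * l)) * φ p) ht hE]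
  exact mul_nonneg (Real.rpow_nonneg hl.le _) (exp_positivity B hsym hpos hu hl ht)

/-! ### The a priori estimate -/

/-- The energy inequality, from testing the equation with `u`. -/
lemma energy_le [CompleteSpace H] {T γ δ α κ₁ κ₂ κ₃ : ℝ}
    (hγ0 : 0 < γ) (hγ1 : γ < 1) (hδ0 : 0 < δ) (hδ1 : δ < 1) (hα0 : 0 < α) (hα1 : α < 1)
    (hκ₁ : 0 ≤ κ₁) (hκ₃ : 0 ≤ κ₃) (B : H →L[ℝ] H)
    (hsym : ∀ x y : H, ⟪B x, y⟫ = ⟪x, B y⟫) (hpos : ∀ x : H, 0 ≤ ⟪B x, x⟫)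
    {u u' f : ℝ → H} (hu : ∀ x, HasDerivAt u (u' x) x) (hu' : Continuous u')
    (heq : ∀ t ∈ Ioc (0:ℝ) T,
      u' t + κ₁ • (∫ s in (0:ℝ)..t, om (1 - γ) (t - s) • u' s)
        + κ₂ • u t + κ₃ • (∫ s in (0:ℝ)..t, om δ (t - s) • u s)
        + (∫ s in (0:ℝ)..t, om α (t - s) • B (u s)) = f t)
    {t : ℝ} (ht : t ∈ Icc (0:ℝ) T) :
    ‖u t‖ ^ 2 + κ₁ * (∫ s in (0:ℝ)..t, om (1 - γ) (t - s) * ‖u s‖ ^ 2)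
        + 2 * κ₂ * (∫ s in (0:ℝ)..t, ‖u s‖ ^ 2)
      ≤ (1 + κ₁ * om (2 - γ) t) * ‖u 0‖ ^ 2 + ∫ s in (0:ℝ)..t, 2 * ⟪f s, u s⟫ := by
  have ht0 := ht.1
  have hν : 0 < 1 - γ := by linarith
  have hc : Continuous u := continuous_iff_continuousAt.2 fun x => (hu x).continuousAt
  have hBu : Continuous fun s => B (u s) := by fun_prop
  have i0 : IntervalIntegrable (fun s => ⟪u' s, u s⟫) volume 0 t :=
    (by fun_prop : Continuous fun s => ⟪u' s, u s⟫).intervalIntegrable _ _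
  have i1 := (intervalIntegrable_volterra hν ht0 (φ := fun p => ⟪u' p.2, u p.1⟫)
    (by fun_prop)).const_mul κ₁
  have i2 : IntervalIntegrable (fun s => κ₂ * ‖u s‖ ^ 2) volume 0 t :=
    (by fun_prop : Continuous fun s => κ₂ * ‖u s‖ ^ 2).intervalIntegrable _ _
  have i3 := (intervalIntegrable_volterra hδ0 ht0 (φ := fun p => ⟪u p.2, u p.1⟫)
    (by fun_prop)).const_mul κ₃
  have i4 := intervalIntegrable_volterra hα0 ht0 (φ := fun p => ⟪B (u p.2), u p.1⟫) (by fun_prop)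
  have htest : ∫ s in (0:ℝ)..t, ⟪f s, u s⟫ = ∫ s in (0:ℝ)..t,
      (⟪u' s, u s⟫ + κ₁ * (∫ r in (0:ℝ)..s, om (1 - γ) (s - r) * ⟪u' r, u s⟫)
        + κ₂ * ‖u s‖ ^ 2 + κ₃ * (∫ r in (0:ℝ)..s, om δ (s - r) * ⟪u r, u s⟫)
        + ∫ r in (0:ℝ)..s, om α (s - r) * ⟪B (u r), u s⟫) := by
    rw [intervalIntegral.integral_of_le ht0, intervalIntegral.integral_of_le ht0]
    refine setIntegral_congr_fun measurableSet_Ioc fun s hs => ?_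
    rw [← heq s ⟨hs.1, hs.2.trans ht.2⟩]
    simp only [inner_add_left, real_inner_smul_left, real_inner_self_eq_norm_sq]
    rw [inner_integral_om hν _ hu', inner_integral_om hδ0 _ hc, inner_integral_om hα0 _ hBu]
  rw [intervalIntegral.integral_add (((i0.add i1).add i2).add i3) i4,
    intervalIntegral.integral_add ((i0.add i1).add i2) i3,
    intervalIntegral.integral_add (i0.add i1) i2, intervalIntegral.integral_add i0 i1,
    intervalIntegral.integral_const_mul, intervalIntegral.integral_const_mul,
    intervalIntegral.integral_const_mul] at htest
  have h0 : ∫ s in (0:ℝ)..t, 2 * ⟪u' s, u s⟫ = ‖u t‖ ^ 2 - ‖u 0‖ ^ 2 :=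
    intervalIntegral.integral_eq_sub_of_hasDerivAt
      (fun x _ => by rw [real_inner_comm]; exact (hu x).norm_sq) (i0.const_mul 2)
  rw [intervalIntegral.integral_const_mul] at h0 ⊢
  have h1 := mul_le_mul_of_nonneg_left (caputo_energy hγ0 hγ1 hu hu' ht0) hκ₁
  have h3 := mul_nonneg hκ₃ (volterra_positivity hδ0 hδ1 (ContinuousLinearMap.id ℝ H)
    (fun _ _ => rfl) (fun _ => real_inner_self_nonneg) hc ht0)
  have h4 := volterra_positivity hα0 hα1 B hsym hpos hc ht0
  simp only [ContinuousLinearMap.id_apply] at h3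
  linarith

/-- The energy inequality closed by one integration in time: after Young's inequality
`2⟨f, u⟩ ≤ 2T‖f‖² + ‖u‖²/(2T)`, integrating the bound for `‖u‖²` over `(0, t)` absorbs
`∫ ‖u‖²` without an exponential Grönwall constant. -/
lemma apriori [CompleteSpace H] {T γ δ α κ₁ κ₂ κ₃ : ℝ} (hT : 0 < T)
    (hγ0 : 0 < γ) (hγ1 : γ < 1) (hδ0 : 0 < δ) (hδ1 : δ < 1) (hα0 : 0 < α) (hα1 : α < 1)
    (hκ₁ : 0 ≤ κ₁) (hκ₂ : 0 ≤ κ₂) (hκ₃ : 0 ≤ κ₃) (B : H →L[ℝ] H)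
    (hsym : ∀ x y : H, ⟪B x, y⟫ = ⟪x, B y⟫) (hpos : ∀ x : H, 0 ≤ ⟪B x, x⟫)
    {u u' f : ℝ → H} (hu : ∀ x, HasDerivAt u (u' x) x) (hu' : Continuous u') (hf : Continuous f)
    (heq : ∀ t ∈ Ioc (0:ℝ) T,
      u' t + κ₁ • (∫ s in (0:ℝ)..t, om (1 - γ) (t - s) • u' s)
        + κ₂ • u t + κ₃ • (∫ s in (0:ℝ)..t, om δ (t - s) • u s)
        + (∫ s in (0:ℝ)..t, om α (t - s) • B (u s)) = f t)
    {t : ℝ} (ht : t ∈ Icc (0:ℝ) T) :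
    ‖u t‖ ^ 2 + κ₁ * (∫ s in (0:ℝ)..t, om (1 - γ) (t - s) * ‖u s‖ ^ 2)
        + 2 * κ₂ * (∫ s in (0:ℝ)..t, ‖u s‖ ^ 2)
      ≤ max (2 + κ₁ * T ^ (1 - γ) * (3 - γ) / Real.Gamma (3 - γ)) (4 * T)
          * (‖u 0‖ ^ 2 + ∫ s in (0:ℝ)..t, ‖f s‖ ^ 2) := by
  have ht0 := ht.1
  have hν : 0 < 1 - γ := by linarith
  have hν2 : 0 < 2 - γ := by linarith
  have hc : Continuous u := continuous_iff_continuousAt.2 fun x => (hu x).continuousAt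
  have iu : ∀ a b, IntervalIntegrable (fun s => ‖u s‖ ^ 2) volume a b := fun a b =>
    (by fun_prop : Continuous fun s => ‖u s‖ ^ 2).intervalIntegrable _ _
  have i_f : ∀ a b, IntervalIntegrable (fun s => ‖f s‖ ^ 2) volume a b := fun a b =>
    (by fun_prop : Continuous fun s => ‖f s‖ ^ 2).intervalIntegrable _ _
  set a := ‖u 0‖ ^ 2 with ha
  set F := ∫ s in (0:ℝ)..t, ‖f s‖ ^ 2 with hF
  set N := ∫ s in (0:ℝ)..t, ‖u s‖ ^ 2 with hN
  have ha0 : 0 ≤ a := sq_nonneg _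
  have hF0 : 0 ≤ F := intervalIntegral.integral_nonneg ht0 fun _ _ => sq_nonneg _
  have hN0 : 0 ≤ N := intervalIntegral.integral_nonneg ht0 fun _ _ => sq_nonneg _
  set R := 2 * T * F + 1 / (2 * T) * N with hR
  have hR0 : 0 ≤ R := by positivity
  have hyoung : ∀ s ∈ Icc 0 t, ∫ r in (0:ℝ)..s, 2 * ⟪f r, u r⟫ ≤ R := by
    intro s hs
    have e : ∫ r in (0:ℝ)..t, (2 * T * ‖f r‖ ^ 2 + 1 / (2 * T) * ‖u r‖ ^ 2) = R := by
      rw [intervalIntegral.integral_add ((i_f _ _).const_mul _) ((iu _ _).const_mul _),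
        intervalIntegral.integral_const_mul, intervalIntegral.integral_const_mul]
    rw [← e]
    calc ∫ r in (0:ℝ)..s, 2 * ⟪f r, u r⟫
        ≤ ∫ r in (0:ℝ)..s, (2 * T * ‖f r‖ ^ 2 + 1 / (2 * T) * ‖u r‖ ^ 2) := by
          refine intervalIntegral.integral_mono_on hs.1
            ((by fun_prop : Continuous fun r => 2 * ⟪f r, u r⟫).intervalIntegrable _ _)
            (((i_f _ _).const_mul _).add ((iu _ _).const_mul _)) fun r _ => ?_
          have h1 := real_inner_le_norm (f r) (u r)
          have h2 : 2 * T * ‖f r‖ ^ 2 + 1 / (2 * T) * ‖u r‖ ^ 2 - 2 * (‖f r‖ * ‖u r‖)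
              = 1 / (2 * T) * (2 * T * ‖f r‖ - ‖u r‖) ^ 2 := by field_simp; ring
          have h3 : 0 ≤ 1 / (2 * T) * (2 * T * ‖f r‖ - ‖u r‖) ^ 2 := by positivity
          linarith
      _ ≤ _ := intervalIntegral.integral_mono_interval le_rfl hs.1 hs.2
          (Filter.Eventually.of_forall fun r => by simp only [Pi.zero_apply]; positivity)
          (((i_f _ _).const_mul _).add ((iu _ _).const_mul _))
  have henergy : ∀ s ∈ Icc 0 t, ‖u s‖ ^ 2
      + κ₁ * (∫ r in (0:ℝ)..s, om (1 - γ) (s - r) * ‖u r‖ ^ 2)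
      + 2 * κ₂ * (∫ r in (0:ℝ)..s, ‖u r‖ ^ 2) ≤ (1 + κ₁ * om (2 - γ) s) * a + R := fun s hs =>
    (energy_le hγ0 hγ1 hδ0 hδ1 hα0 hα1 hκ₁ hκ₃ B hsym hpos hu hu' heq
      ⟨hs.1, hs.2.trans ht.2⟩).trans (by linarith [hyoung s hs])
  have hsup : ∀ s ∈ Icc 0 t, ‖u s‖ ^ 2 ≤ (1 + κ₁ * om (2 - γ) s) * a + R := by
    intro s hs
    have h1 := henergy s hs
    have h2 : 0 ≤ κ₁ * (∫ r in (0:ℝ)..s, om (1 - γ) (s - r) * ‖u r‖ ^ 2) :=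
      mul_nonneg hκ₁ (intervalIntegral.integral_nonneg hs.1 fun r hr =>
        mul_nonneg (om_nonneg hν (by linarith [hr.2])) (sq_nonneg _))
    have h3 : 0 ≤ 2 * κ₂ * (∫ r in (0:ℝ)..s, ‖u r‖ ^ 2) :=
      mul_nonneg (by linarith) (intervalIntegral.integral_nonneg hs.1 fun _ _ => sq_nonneg _)
    linarith
  have io : IntervalIntegrable (fun s => κ₁ * om (2 - γ) s) volume 0 t :=
    (intervalIntegrable_om hν2 0 t).const_mul κ₁
  have ic : ∀ c : ℝ, IntervalIntegrable (fun _ => c) volume 0 t := fun c => by simp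
  have hNle : N ≤ (t + κ₁ * om (3 - γ) t) * a + t * R := by
    have h := intervalIntegral.integral_mono_on ht0 (iu 0 t)
      ((((ic 1).add io).mul_const a).add (ic R)) hsup
    rw [intervalIntegral.integral_add (((ic 1).add io).mul_const a) (ic R),
      intervalIntegral.integral_mul_const, intervalIntegral.integral_add (ic 1) io,
      intervalIntegral.integral_const_mul, integral_om hν2 ht0] at h
    simp only [intervalIntegral.integral_const, smul_eq_mul, sub_zero, mul_one] at h
    rwa [show 2 - γ + 1 = 3 - γ by ring] at h
  have hΓ2 : 0 < Real.Gamma (2 - γ) := Real.Gamma_pos_of_pos hν2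
  have hΓ : Real.Gamma (3 - γ) = (2 - γ) * Real.Gamma (2 - γ) := by
    rw [← Real.Gamma_add_one hν2.ne']; congr 1; ring
  have hΓ3 : 0 < Real.Gamma (3 - γ) := Real.Gamma_pos_of_pos (by linarith)
  have ho2 : om (2 - γ) t ≤ T ^ (1 - γ) / Real.Gamma (2 - γ) := by
    rw [om, show 2 - γ - 1 = 1 - γ by ring]
    gcongr
    exact ht.2
  have ho3 : om (3 - γ) t ≤ T * (T ^ (1 - γ) / Real.Gamma (3 - γ)) := by
    rw [om, ← mul_div_assoc, show 3 - γ - 1 = 1 + (1 - γ) by ring]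
    have e : T * T ^ (1 - γ) = T ^ (1 + (1 - γ)) := by rw [Real.rpow_add hT, Real.rpow_one]
    rw [e]
    gcongr
    exact ht.2
  set K2 := T ^ (1 - γ) / Real.Gamma (2 - γ) with hK2
  set K3 := T ^ (1 - γ) / Real.Gamma (3 - γ) with hK3
  have hconst : 2 + κ₁ * T ^ (1 - γ) * (3 - γ) / Real.Gamma (3 - γ) = 2 + κ₁ * K2 + κ₁ * K3 := by
    rw [hK2, hK3, hΓ]; field_simp; ring
  have hNT : 1 / (2 * T) * N ≤ (1 + κ₁ * K3) * a + 2 * T * F := by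
    have h1 : (t + κ₁ * om (3 - γ) t) * a ≤ (T + κ₁ * (T * K3)) * a := by
      gcongr
      exact ht.2
    have h2 : t * R ≤ T * R := by gcongr; exact ht.2
    have h3 : N = 2 * T * (1 / (2 * T) * N) := by field_simp
    set n := 1 / (2 * T) * N
    have h4 : T * n ≤ T * ((1 + κ₁ * K3) * a + 2 * T * F) := by nlinarith
    exact le_of_mul_le_mul_left h4 hT
  have hfin := henergy t ⟨ht0, le_rfl⟩
  have h1 : (1 + κ₁ * om (2 - γ) t) * a ≤ (1 + κ₁ * K2) * a := by gcongr
  rw [hconst]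
  calc _ ≤ (2 + κ₁ * K2 + κ₁ * K3) * a + (4 * T) * F := by linarith
    _ ≤ _ := by
      rw [mul_add]
      gcongr
      · exact le_max_left _ _
      · exact le_max_right _ _

end Energy

/-- A priori estimate for the transformed time-fractional mixed
sub-diffusion and diffusion-wave problem. -/
theorem stmt_12 {H : Type*} [NormedAddCommGroup H] [InnerProductSpace ℝ H] [CompleteSpace H]
    (T γ δ α κ₁ κ₂ κ₃ κA : ℝ) (hT : 0 < T)
    (hγ0 : 0 < γ) (hγ1 : γ < 1) (hδ0 : 0 < δ) (hδ1 : δ < 1) (hα0 : 0 < α) (hα1 : α < 1)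
    (hκ₁ : 0 ≤ κ₁) (hκ₂ : 0 ≤ κ₂) (hκ₃ : 0 ≤ κ₃) (hκA : 0 < κA)
    (A : H →ₗ[ℝ] H)
    (hsym : ∀ x y : H, ⟪A x, y⟫ = ⟪x, A y⟫)
    (hcoer : ∀ x : H, κA * ‖x‖^2 ≤ ⟪A x, x⟫)
    (u u' f : ℝ → H)
    (hu : ∀ t ∈ Icc (0:ℝ) T, HasDerivAt u (u' t) t)
    (hu' : ContinuousOn u' (Icc 0 T))
    (hf : ContinuousOn f (Icc 0 T))
    (heq : ∀ t ∈ Ioc (0:ℝ) T,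
      u' t + κ₁ • (∫ s in (0:ℝ)..t, om (1 - γ) (t - s) • u' s)
        + κ₂ • u t + κ₃ • (∫ s in (0:ℝ)..t, om δ (t - s) • u s)
        + (∫ s in (0:ℝ)..t, om α (t - s) • A (u s)) = f t)
    (t : ℝ) (ht : t ∈ Icc (0:ℝ) T) :
    ‖u t‖^2 + κ₁ * (∫ s in (0:ℝ)..t, om (1 - γ) (t - s) * ‖u s‖^2)
        + 2 * κ₂ * (∫ s in (0:ℝ)..t, ‖u s‖^2)
      ≤ max (2 + κ₁ * T ^ (1 - γ) * (3 - γ) / Real.Gamma (3 - γ)) (4 * T)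
          * (‖u 0‖^2 + ∫ s in (0:ℝ)..t, ‖f s‖^2) := by
  -- Hellinger–Toeplitz: a symmetric operator defined on all of `H` is bounded.
  let A' : H →L[ℝ] H := ⟨A, LinearMap.IsSymmetric.continuous (T := A) hsym⟩
  -- `u` is only controlled on `[0, T]`, so it is replaced by a globally `C¹` function.
  set V : ℝ → H := IccExtend hT.le ((Icc 0 T).domRestrict u') with hV
  set g : ℝ → H := IccExtend hT.le ((Icc 0 T).domRestrict f) with hg
  have hVc : Continuous V := hu'.domRestrict.Icc_extend'
  have hgc : Continuous g := hf.domRestrict.Icc_extend'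
  have hVe : ∀ s ∈ Icc 0 T, V s = u' s := fun s hs => IccExtend_of_mem hT.le _ hs
  have hge : ∀ s ∈ Icc 0 T, g s = f s := fun s hs => IccExtend_of_mem hT.le _ hs
  set U : ℝ → H := fun s => u 0 + ∫ r in (0:ℝ)..s, V r with hU
  have hUd : ∀ s, HasDerivAt U (V s) s := fun s =>
    (hVc.integral_hasStrictDerivAt 0 s).hasDerivAt.const_add _
  have hUe : ∀ s ∈ Icc 0 T, U s = u s := by
    intro s hs
    have h := intervalIntegral.integral_eq_sub_of_hasDerivAt (f := u) (f' := V) (a := 0) (b := s)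
      (fun x hx => by
        rw [uIcc_of_le hs.1] at hx
        have hx' : x ∈ Icc 0 T := ⟨hx.1, hx.2.trans hs.2⟩
        rw [hVe x hx']; exact hu x hx') (hVc.intervalIntegrable _ _)
    simp only [hU, h]; abel
  have hcongr : ∀ {p q : ℝ → H} {s : ℝ},
      s ∈ Icc 0 T → (∀ r ∈ Icc 0 T, p r = q r) →
      ∫ r in (0:ℝ)..s, p r = ∫ r in (0:ℝ)..s, q r := by
    intro p q s hs hpq
    refine intervalIntegral.integral_congr fun r hr => ?_
    rw [uIcc_of_le hs.1] at hr
    exact hpq r ⟨hr.1, hr.2.trans hs.2⟩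
  have key := apriori hT hγ0 hγ1 hδ0 hδ1 hα0 hα1 hκ₁ hκ₂ hκ₃ A' hsym
    (fun x => (mul_nonneg hκA.le (sq_nonneg _)).trans (hcoer x)) hUd hVc hgc (fun s hs => by
      have hs' : s ∈ Icc 0 T := Ioc_subset_Icc_self hs
      rw [hVe s hs', hUe s hs', hge s hs', ← heq s hs,
        hcongr hs' (fun r hr => by rw [hVe r hr] :
          ∀ r ∈ Icc 0 T, om (1 - γ) (s - r) • V r = om (1 - γ) (s - r) • u' r),
        hcongr hs' (fun r hr => by rw [hUe r hr] :
          ∀ r ∈ Icc 0 T, om δ (s - r) • U r = om δ (s - r) • u r),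
        hcongr hs' (fun r hr => by rw [hUe r hr]; rfl :
          ∀ r ∈ Icc 0 T, om α (s - r) • A' (U r) = om α (s - r) • A (u r))]) ht
  have c1 : ∫ s in (0:ℝ)..t, om (1 - γ) (t - s) * ‖U s‖ ^ 2
      = ∫ s in (0:ℝ)..t, om (1 - γ) (t - s) * ‖u s‖ ^ 2 :=
    intervalIntegral.integral_congr fun r hr => by
      rw [uIcc_of_le ht.1] at hr
      simp only [hUe r ⟨hr.1, hr.2.trans ht.2⟩]
  have c2 : ∫ s in (0:ℝ)..t, ‖U s‖ ^ 2 = ∫ s in (0:ℝ)..t, ‖u s‖ ^ 2 :=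
    intervalIntegral.integral_congr fun r hr => by
      rw [uIcc_of_le ht.1] at hr
      simp only [hUe r ⟨hr.1, hr.2.trans ht.2⟩]
  have c3 : ∫ s in (0:ℝ)..t, ‖g s‖ ^ 2 = ∫ s in (0:ℝ)..t, ‖f s‖ ^ 2 :=
    intervalIntegral.integral_congr fun r hr => by
      rw [uIcc_of_le ht.1] at hr
      simp only [hge r ⟨hr.1, hr.2.trans ht.2⟩]
  rwa [c1, c2, c3, hUe t ht, hUe 0 ⟨le_rfl, hT.le⟩] at key
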